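/- Let D be a finite digraph, let k ≥ 1 be an integer, and let T ⊆ V(D) be a (k−1,k−1)-linked set of size 2k−1. Then the T-bramble B_T is a bramble of order exactly k, and a set X ⊆ V(D) is a hitting set of B_T if and only if X is a (T,k−1)-balanced separator of D. -/

import Mathlib

/-- A digraph on vertex type `V`, given by its adjacency relation
(loops are allowed; parallel edges are irrelevant here). -/
structure Dgraph (V : Type) where
  Adj : V → V → Prop

namespace Dgraph

variable {V : Type}

/-- There is a directed walk from `u` to `v` in `D` using only vertices of `S`. -/
def ReachIn (D : Dgraph V) (S : Set V) (u v : V) : Prop :=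
  u ∈ S ∧ v ∈ S ∧ Relation.ReflTransGen (fun a b => a ∈ S ∧ b ∈ S ∧ D.Adj a b) u v

/-- The subdigraph of `D` induced on `S` is strongly connected. -/
def StronglyConnectedOn (D : Dgraph V) (S : Set V) : Prop :=
  ∀ u ∈ S, ∀ v ∈ S, D.ReachIn S u v

/-- `C` is the vertex set of a strong component of the subdigraph of `D` induced on `A`,
i.e. a maximal subset of `A` inducing a strongly connected subdigraph. -/
def IsStrongComponentOn (D : Dgraph V) (A C : Set V) : Prop :=
  C ⊆ A ∧ D.StronglyConnectedOn C ∧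
    ∀ C' : Set V, C ⊆ C' → C' ⊆ A → D.StronglyConnectedOn C' → C' = C

/-- `Z` is a `(T, r)`-balanced separator of `D`: every strong component of `D \ Z`
contains at most `r` vertices of `T`. -/
def IsBalancedSeparator (D : Dgraph V) (T : Set V) (r : ℕ) (Z : Set V) : Prop :=
  ∀ C : Set V, D.IsStrongComponentOn Zᶜ C → (C ∩ T).ncard ≤ r

/-- `T` is `(k, r)`-linked in `D`: every `(T, r)`-balanced separator has size at least `k + 1`. -/
def IsLinked (D : Dgraph V) (T : Set V) (k r : ℕ) : Prop :=
  ∀ Z : Set V, D.IsBalancedSeparator T r Z → k + 1 ≤ Z.ncard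

/-- `β` is a haven of order `k` in `D`: it assigns to every `Z` with `|Z| ≤ k - 1`
the vertex set of a strong component of `D \ Z`, monotonically. -/
def IsHaven (D : Dgraph V) (k : ℕ) (β : Set V → Set V) : Prop :=
  (∀ Z : Set V, Z.ncard < k → D.IsStrongComponentOn Zᶜ (β Z)) ∧
  (∀ Z Z' : Set V, Z.ncard < k → Z' ⊆ Z → β Z ⊆ β Z')

/-- A bramble in `D`: a family of (vertex sets of) strongly connected subdigraphs
any two of which touch. -/
def IsBramble (D : Dgraph V) (ℬ : Set (Set V)) : Prop :=
  (∀ B ∈ ℬ, D.StronglyConnectedOn B) ∧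
  ∀ B ∈ ℬ, ∀ B' ∈ ℬ,
    (B ∩ B').Nonempty ∨
      ((∃ u ∈ B, ∃ v ∈ B', D.Adj u v) ∧ (∃ u ∈ B', ∃ v ∈ B, D.Adj u v))

/-- `C` is a hitting set of the family `ℬ`. -/
def IsHittingSet (ℬ : Set (Set V)) (C : Set V) : Prop :=
  ∀ B ∈ ℬ, (C ∩ B).Nonempty

/-- The order of a bramble: the minimum size of a hitting set. -/
noncomputable def brambleOrder (ℬ : Set (Set V)) : ℕ :=
  sInf {n : ℕ | ∃ C : Set V, IsHittingSet ℬ C ∧ C.ncard = n}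

/-- The `T`-bramble with threshold `g`: all induced strongly connected subdigraphs
containing at least `g` vertices of `T`. -/
def TBramble (D : Dgraph V) (T : Set V) (g : ℕ) : Set (Set V) :=
  {B : Set V | D.StronglyConnectedOn B ∧ g ≤ (B ∩ T).ncard}

/-- The restricted bramble `ℬ(X)`: elements of `ℬ` intersecting `X`. -/
def restrictedBramble (ℬ : Set (Set V)) (X : Set V) : Set (Set V) :=
  {B ∈ ℬ | (B ∩ X).Nonempty}

/-- The complement bramble `ℬ̄(X)`: elements of `ℬ` disjoint from `X`. -/
def complementBramble (ℬ : Set (Set V)) (X : Set V) : Set (Set V) :=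
  {B ∈ ℬ | B ∩ X = ∅}

/-- A directed path in `D`, as a duplicate-free list of consecutively adjacent vertices. -/
def IsPath (D : Dgraph V) (P : List V) : Prop :=
  P.Nodup ∧ P.Chain' D.Adj

/-- A directed path in `D` starting in `A` and ending in `B`. -/
def IsPathFromTo (D : Dgraph V) (P : List V) (A B : Set V) : Prop :=
  D.IsPath P ∧ ∃ h : P ≠ [], P.head h ∈ A ∧ P.getLast h ∈ B

/-- There are `n` pairwise vertex-disjoint directed paths from `A` to `B` in `D`. -/
def HasDisjointPaths (D : Dgraph V) (A B : Set V) (n : ℕ) : Prop :=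
  ∃ Ps : Fin n → List V, (∀ i, D.IsPathFromTo (Ps i) A B) ∧
    ∀ i j, i ≠ j → ∀ v, v ∈ Ps i → v ∉ Ps j

/-- `A` is well-linked in `D`. -/
def WellLinked (D : Dgraph V) (A : Set V) : Prop :=
  ∀ X Y : Set V, X ⊆ A → Y ⊆ A → Disjoint X Y → X.ncard = Y.ncard →
    D.HasDisjointPaths X Y X.ncard

end Dgraph

/-!
A strongly connected set avoiding `X` lies in a strong component of `D \ X`, so `X` misses a member
of `B_T` exactly when some component of `D \ X` has at least `k` vertices in `T`. Since `|T| < 2k`,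
any two subsets of `T` of size at least `k` meet: members of `B_T` therefore intersect pairwise
inside `T`, and any `k` vertices of `T` hit `B_T`. A smaller hitting set would be a balanced
separator contradicting linkedness.
-/

theorem inter_nonempty_of_ncard_lt_ncard_add_ncard {α : Type*} {s t u : Set α} (hs : s.Finite)
    (hts : t ⊆ s) (hus : u ⊆ s) (hcard : s.ncard < t.ncard + u.ncard) : (t ∩ u).Nonempty := by
  by_contra hempty
  have hdisj : Disjoint t u :=
    Set.disjoint_iff_inter_eq_empty.2 (Set.not_nonempty_iff_eq_empty.1 hempty)
  rw [← Set.ncard_union_eq hdisj (hs.subset hts) (hs.subset hus)] at hcard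
  exact hcard.not_ge (Set.ncard_le_ncard (Set.union_subset hts hus) hs)

namespace Dgraph

variable {V : Type} {D : Dgraph V} {S S' T A B C X : Set V} {ℬ 𝒮 : Set (Set V)} {u v : V} {g r : ℕ}

theorem ReachIn.mono (hSS' : S ⊆ S') (h : D.ReachIn S u v) : D.ReachIn S' u v :=
  ⟨hSS' h.1, hSS' h.2.1,
    Relation.ReflTransGen.mono (fun _ _ ⟨ha, hb, hab⟩ => ⟨hSS' ha, hSS' hb, hab⟩) _ _ h.2.2⟩

theorem stronglyConnectedOn_sUnion_of_directedOn (hdir : DirectedOn (· ⊆ ·) 𝒮)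
    (h𝒮 : ∀ S ∈ 𝒮, D.StronglyConnectedOn S) : D.StronglyConnectedOn (⋃₀ 𝒮) := by
  rintro u ⟨S, hS, hu⟩ v ⟨S', hS', hv⟩
  obtain ⟨U, hU, hSU, hS'U⟩ := hdir S hS S' hS'
  exact (h𝒮 U hU u (hSU hu) v (hS'U hv)).mono (Set.subset_sUnion_of_mem hU)

theorem StronglyConnectedOn.exists_isStrongComponentOn_superset (hB : D.StronglyConnectedOn B)
    (hBA : B ⊆ A) : ∃ C, B ⊆ C ∧ D.IsStrongComponentOn A C := by
  have hchains : ∀ 𝒮 ⊆ {C | C ⊆ A ∧ D.StronglyConnectedOn C}, IsChain (· ⊆ ·) 𝒮 →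
      ⋃₀ 𝒮 ∈ {C | C ⊆ A ∧ D.StronglyConnectedOn C} := fun 𝒮 h𝒮 hchain =>
    ⟨Set.sUnion_subset fun S hS => (h𝒮 hS).1,
      stronglyConnectedOn_sUnion_of_directedOn hchain.directedOn fun S hS => (h𝒮 hS).2⟩
  obtain ⟨C, hBC, hC⟩ := zorn_subset_nonempty {C | C ⊆ A ∧ D.StronglyConnectedOn C}
    (fun 𝒮 h𝒮 hchain _ => ⟨⋃₀ 𝒮, hchains 𝒮 h𝒮 hchain, fun _ => Set.subset_sUnion_of_mem⟩)
    B ⟨hBA, hB⟩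
  exact ⟨C, hBC, hC.prop.1, hC.prop.2, fun C' hCC' hC'A hC' =>
    (hC.eq_of_subset ⟨hC'A, hC'⟩ hCC').symm⟩

theorem IsHittingSet.isBalancedSeparator (hX : IsHittingSet (D.TBramble T (r + 1)) X) :
    D.IsBalancedSeparator T r X := by
  intro C hC
  by_contra! hlarge
  obtain ⟨x, hxX, hxC⟩ := hX C ⟨hC.2.1, hlarge⟩
  exact hC.1 hxC hxX

theorem IsBalancedSeparator.isHittingSet (hT : T.Finite) (hX : D.IsBalancedSeparator T r X) :
    IsHittingSet (D.TBramble T (r + 1)) X := by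
  rintro B ⟨hB, hlarge⟩
  by_contra hmiss
  have hBX : B ⊆ Xᶜ := fun x hxB hxX => hmiss ⟨x, hxX, hxB⟩
  obtain ⟨C, hBC, hC⟩ := hB.exists_isStrongComponentOn_superset hBX
  have hle : (B ∩ T).ncard ≤ (C ∩ T).ncard :=
    Set.ncard_le_ncard (Set.inter_subset_inter_left T hBC) (hT.inter_of_right C)
  exact (hlarge.trans hle).not_gt (Nat.lt_succ_of_le (hX C hC))

theorem isHittingSet_tBramble_iff_isBalancedSeparator (hT : T.Finite) :
    IsHittingSet (D.TBramble T (r + 1)) X ↔ D.IsBalancedSeparator T r X :=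
  ⟨IsHittingSet.isBalancedSeparator, IsBalancedSeparator.isHittingSet hT⟩

theorem isHittingSet_tBramble_of_subset (hT : T.Finite) (hST : S ⊆ T)
    (hcard : T.ncard < S.ncard + g) : IsHittingSet (D.TBramble T g) S := by
  rintro B ⟨-, hB⟩
  have hmeet : (S ∩ (B ∩ T)).Nonempty :=
    inter_nonempty_of_ncard_lt_ncard_add_ncard hT hST Set.inter_subset_right (by lia)
  exact hmeet.mono (Set.inter_subset_inter_right S Set.inter_subset_left)

theorem isBramble_tBramble (hT : T.Finite) (hcard : T.ncard < 2 * g) :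
    D.IsBramble (D.TBramble T g) := by
  refine ⟨fun B hB => hB.1, fun B hB B' hB' => .inl ?_⟩
  have hhit : IsHittingSet (D.TBramble T g) (B ∩ T) :=
    isHittingSet_tBramble_of_subset hT Set.inter_subset_right (by have := hB.2; lia)
  exact (hhit B' hB').mono (Set.inter_subset_inter_left B' Set.inter_subset_left)

theorem brambleOrder_eq_ncard_of_forall_le (hC : IsHittingSet ℬ C)
    (hmin : ∀ C', IsHittingSet ℬ C' → C.ncard ≤ C'.ncard) : brambleOrder ℬ = C.ncard :=
  IsLeast.csInf_eq ⟨⟨C, hC, rfl⟩, by rintro _ ⟨C', hC', rfl⟩; exact hmin C' hC'⟩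

end Dgraph

open Dgraph in
/-- if `T` is a `(k-1, k-1)`-linked set of size `2k - 1` in the finite
digraph `D`, then the `T`-bramble `B_T` is a bramble of order exactly `k`, and a set
`X` is a hitting set of `B_T` if and only if `X` is a `(T, k-1)`-balanced separator. -/
theorem stmt5 {V : Type} [Finite V] (D : Dgraph V) (k : ℕ) (hk : 1 ≤ k) (T : Set V)
    (hT : T.ncard = 2 * k - 1) (hlinked : D.IsLinked T (k - 1) (k - 1)) :
    D.IsBramble (D.TBramble T k) ∧ brambleOrder (D.TBramble T k) = k ∧
      ∀ X : Set V, IsHittingSet (D.TBramble T k) X ↔ D.IsBalancedSeparator T (k - 1) X := by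
  obtain ⟨r, rfl⟩ := Nat.exists_eq_add_of_le' hk
  have hTfin : T.Finite := Set.toFinite T
  have hlt : T.ncard < 2 * (r + 1) := by lia
  refine ⟨isBramble_tBramble hTfin hlt, ?_,
    fun X => isHittingSet_tBramble_iff_isBalancedSeparator hTfin⟩
  obtain ⟨S, hST, hS⟩ : ∃ S ⊆ T, S.ncard = r + 1 := Set.exists_subset_card_eq (by lia)
  have hhit : IsHittingSet (D.TBramble T (r + 1)) S :=
    isHittingSet_tBramble_of_subset hTfin hST (by lia)
  calc brambleOrder (D.TBramble T (r + 1))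
      = S.ncard := brambleOrder_eq_ncard_of_forall_le hhit fun C hC =>
        hS.trans_le (hlinked C hC.isBalancedSeparator)
    _ = r + 1 := hS
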